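/- arXiv:1208.4074 — 2 statements merged into one kernel-verified Lean document; each statement's English description precedes it below -/
import Mathlib

section
/- For every real number c and every z ∈ ℂ ∖ ℤ, the symmetric limit lim_{N→∞} ∑_{n=−N}^{N} e^{2πi c (z+n)} / (2πi (z+n)) exists and equals R_c(e^{2πi z}); explicitly, writing y = e^{2πi z}, this limit equals (1/2)·y^c·(y+1)/(y−1) when c ∈ ℤ, and equals y^{⌈c⌉}/(y−1) when c ∉ ℤ. -/
noncomputable section

open Complex Filter Topology
open scoped Classical

/-- `ee x = e^{2πix}`. -/
def ee (x : ℂ) : ℂ := Complex.exp (2 * (Real.pi : ℂ) * Complex.I * x)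

/-- The rational function `R_c`, defined as `(1/2)·y^c·(y+1)/(y−1)` when `c ∈ ℤ`
(integer power `y^c`) and as `y^⌈c⌉/(y−1)` when `c ∉ ℤ`. -/
def Rc (c : ℝ) (y : ℂ) : ℂ :=
  if (⌈c⌉ : ℝ) = c then 1 / 2 * y ^ ⌈c⌉ * (y + 1) / (y - 1) else y ^ ⌈c⌉ / (y - 1)

lemma ee_add (x y : ℂ) : ee (x + y) = ee x * ee y := by
  simp only [ee, mul_add, Complex.exp_add]

lemma ee_zero : ee 0 = 1 := by simp [ee]

lemma ee_ne_zero (x : ℂ) : ee x ≠ 0 := Complex.exp_ne_zero _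

lemma ee_int (n : ℤ) : ee n = 1 := by
  rw [ee, Complex.exp_eq_one_iff]; exact ⟨n, by ring⟩

lemma ee_int_mul (n : ℤ) (z : ℂ) : ee (n * z) = ee z ^ n := by
  rw [ee, ee, ← Complex.exp_int_mul]; congr 1; ring

lemma two_pi_I_ne : (2 * (Real.pi : ℂ) * Complex.I) ≠ 0 := Complex.two_pi_I_ne_zero

lemma ee_eq_one {x : ℂ} (h : ee x = 1) : ∃ n : ℤ, x = n := by
  rw [ee, Complex.exp_eq_one_iff] at h
  obtain ⟨n, hn⟩ := h
  refine ⟨n, mul_left_cancel₀ two_pi_I_ne ?_⟩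
  rw [hn]; ring

lemma ee_cont (w : ℂ) : Continuous (fun t : ℝ => ee (t * w)) := by
  unfold ee; fun_prop

lemma ee_deriv (w : ℂ) (t : ℝ) :
    HasDerivAt (fun t : ℝ => ee (t * w)) (2 * (Real.pi : ℂ) * Complex.I * w * ee (t * w)) t := by
  have h1 : HasDerivAt (fun t : ℝ => 2 * (Real.pi : ℂ) * Complex.I * ((t : ℂ) * w))
      (2 * (Real.pi : ℂ) * Complex.I * (1 * w)) t :=
    ((Complex.ofRealCLM.hasDerivAt (x := t)).mul_const w).const_mul _
  have := h1.cexp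
  unfold ee
  convert this using 1; ring

lemma sum_Icc_succ' (f : ℤ → ℂ) (N : ℕ) :
    ∑ n ∈ Finset.Icc (-((N + 1 : ℕ) : ℤ)) ((N + 1 : ℕ) : ℤ), f n =
    ∑ n ∈ Finset.Icc (-(N : ℤ)) (N : ℤ), f n + (f (N + 1) + f (-(N + 1))) := by
  have : Finset.Icc (-((N + 1 : ℕ) : ℤ)) ((N + 1 : ℕ) : ℤ) =
      insert ((N : ℤ) + 1) (insert (-((N : ℤ) + 1)) (Finset.Icc (-(N : ℤ)) (N : ℤ))) := by
    ext x; simp only [Finset.mem_Icc, Finset.mem_insert]; push_cast; omega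
  rw [this, Finset.sum_insert, Finset.sum_insert]
  · ring
  · simp
  · simp only [Finset.mem_Icc, Finset.mem_insert]; omega

def sn (t : ℝ) (w : ℝ) : ℂ := ee (t * w) - ee (t * (-w))

lemma dirichlet (t : ℝ) (N : ℕ) :
    (∑ n ∈ Finset.Icc (-(N : ℤ)) (N : ℤ), ee (t * n)) * sn t (1 / 2) = sn t (N + 1 / 2) := by
  induction N with
  | zero => simp [ee_zero]
  | succ N ih =>
    rw [sum_Icc_succ', add_mul, ih]
    simp only [sn, add_mul, mul_sub, ← ee_add]
    push_cast
    ring_nf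

lemma RL0 (s : Set ℝ) (hs : MeasurableSet s) (g : ℝ → ℂ) :
    Tendsto (fun w : ℝ => ∫ t in s, ee (t * w) * g t) (cocompact ℝ) (𝓝 0) := by
  have h := (Real.tendsto_integral_exp_smul_cocompact (s.indicator g)).comp
    (Homeomorph.neg ℝ).isClosedEmbedding.tendsto_cocompact
  refine h.congr fun w => ?_
  rw [← MeasureTheory.integral_indicator hs]
  simp only [Function.comp]
  congr 1
  ext t
  by_cases ht : t ∈ s
  · simp only [ht, Set.indicator_of_mem, Circle.smul_def, Real.fourierChar_apply, ee, smul_eq_mul]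
    simp
    left; congr 1; ring
  · simp [ht]

lemma RL1 (a b : ℝ) (g : ℝ → ℂ) :
    Tendsto (fun w : ℝ => ∫ t in a..b, ee (t * w) * g t) (cocompact ℝ) (𝓝 0) := by
  simp only [intervalIntegral]
  simpa using (RL0 (Set.Ioc a b) measurableSet_Ioc g).sub (RL0 (Set.Ioc b a) measurableSet_Ioc g)

lemma RL (a b : ℝ) (g : ℝ → ℂ) (hg : ContinuousOn g (Set.uIcc a b)) :
    Tendsto (fun N : ℕ => ∫ t in a..b, sn t (N + 1 / 2) * g t) atTop (𝓝 0) := by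
  have h1 : Tendsto (fun N : ℕ => (N : ℝ) + 1 / 2) atTop (cocompact ℝ) :=
    (tendsto_atTop_add_const_right _ _ tendsto_natCast_atTop_atTop).mono_right atTop_le_cocompact
  have h2 : Tendsto (fun N : ℕ => -((N : ℝ) + 1 / 2)) atTop (cocompact ℝ) :=
    (tendsto_neg_atTop_atBot.comp
      (tendsto_atTop_add_const_right _ _ tendsto_natCast_atTop_atTop)).mono_right atBot_le_cocompact
  have h := ((RL1 a b g).comp h1).sub ((RL1 a b g).comp h2)
  rw [sub_zero] at h
  refine h.congr fun N => ?_
  simp only [Function.comp]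
  rw [← intervalIntegral.integral_sub]
  · congr 1; ext t; simp only [sn]; push_cast; ring
  · exact ((ee_cont _).continuousOn.mul hg).intervalIntegrable
  · exact ((ee_cont _).continuousOn.mul hg).intervalIntegrable

lemma sn_half_ne {t : ℝ} (h0 : 0 < t) (h1 : t < 1) : sn t (1 / 2) ≠ 0 := by
  intro h
  have h2 : ee (t : ℂ) = 1 := by
    have : ee (t : ℂ) = ee (t * ((1 / 2 : ℝ) : ℂ)) * ee (t * ((1 / 2 : ℝ) : ℂ)) := by
      rw [← ee_add]; congr 1; push_cast; ring
    rw [this]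
    nth_rewrite 2 [sub_eq_zero.1 h]
    rw [← ee_add, ← ee_zero]; congr 1; ring
  obtain ⟨n, hn⟩ := ee_eq_one h2
  have hn' : t = n := by exact_mod_cast hn
  rw [hn'] at h0 h1
  have : 0 < n := by exact_mod_cast h0
  have : n < 1 := by exact_mod_cast h1
  omega

def SS (z : ℂ) (c : ℝ) (N : ℕ) : ℂ := ∑ n ∈ Finset.Icc (-(N : ℤ)) (N : ℤ),
        ee ((c : ℂ) * (z + (n : ℂ))) / (2 * (Real.pi : ℂ) * Complex.I * (z + (n : ℂ)))

lemma SS_sub (z : ℂ) (hz : ∀ n : ℤ, z ≠ (n : ℂ)) (a b : ℝ) (N : ℕ) :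
    SS z b N - SS z a N = ∫ t in a..b, ee (t * z) *
      ∑ n ∈ Finset.Icc (-(N : ℤ)) (N : ℤ), ee (t * n) := by
  symm
  apply intervalIntegral.integral_eq_sub_of_hasDerivAt (f := fun t => SS z t N)
  · intro t _
    rw [Finset.mul_sum]
    apply HasDerivAt.fun_sum
    intro n _
    have hne : z + n ≠ 0 := fun h => hz (-n) (by push_cast; linear_combination h)
    have := (ee_deriv (z + n) t).div_const (2 * (Real.pi : ℂ) * Complex.I * (z + (n : ℂ)))
    refine this.congr_deriv ?_
    rw [mul_div_cancel_left₀ _ (mul_ne_zero two_pi_I_ne hne), ← ee_add, mul_add]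
  · apply Continuous.intervalIntegrable
    exact (ee_cont z).mul (continuous_finsetSum _ fun n _ => ee_cont _)

lemma SS_interior (z : ℂ) (hz : ∀ n : ℤ, z ≠ (n : ℂ)) (c : ℝ) (h0 : 0 < c) (h1 : c < 1) :
    Tendsto (fun N : ℕ => SS z c N - SS z (1 / 2) N) atTop (𝓝 0) := by
  have hI : ∀ t ∈ Set.uIcc (1 / 2) c, sn t (1 / 2) ≠ 0 := by
    intro t ht
    rw [Set.mem_uIcc] at ht
    apply sn_half_ne <;> rcases ht with ht | ht <;> linarith [ht.1, ht.2]
  have hc : ContinuousOn (fun t : ℝ => ee (t * z) / sn t (1 / 2)) (Set.uIcc (1 / 2) c) :=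
    (ee_cont z).continuousOn.div ((ee_cont _).sub (ee_cont _)).continuousOn hI
  refine (RL _ _ _ hc).congr fun N => ?_
  rw [SS_sub z hz]
  apply intervalIntegral.integral_congr
  intro t ht
  simp only
  rw [← dirichlet]
  have := hI t ht
  field_simp

lemma int_dirichlet (N : ℕ) :
    ∫ t in (0:ℝ)..(1/2), ∑ n ∈ Finset.Icc (-(N : ℤ)) (N : ℤ), ee (t * n) = 1 / 2 := by
  induction N with
  | zero => simp [ee_zero]
  | succ N ih =>
    simp only [sum_Icc_succ']
    rw [intervalIntegral.integral_add, ih]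
    · have hne : ((N : ℂ) + 1) ≠ 0 := by exact_mod_cast N.succ_ne_zero
      have : ∫ t in (0:ℝ)..(1/2), (ee (t * ((N + 1 : ℤ) : ℂ)) + ee (t * ((-(N + 1) : ℤ) : ℂ))) =
          (ee ((1 / 2 : ℝ) * ((N + 1 : ℤ) : ℂ)) - ee ((1 / 2 : ℝ) * ((-(N + 1) : ℤ) : ℂ))) /
            (2 * (Real.pi : ℂ) * Complex.I * (N + 1)) -
          (ee ((0 : ℝ) * ((N + 1 : ℤ) : ℂ)) - ee ((0 : ℝ) * ((-(N + 1) : ℤ) : ℂ))) /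
            (2 * (Real.pi : ℂ) * Complex.I * (N + 1)) := by
        apply intervalIntegral.integral_eq_sub_of_hasDerivAt (f := fun t : ℝ =>
          (ee (t * ((N + 1 : ℤ) : ℂ)) - ee (t * ((-(N + 1) : ℤ) : ℂ))) /
            (2 * (Real.pi : ℂ) * Complex.I * (N + 1)))
        · intro t _
          refine (((ee_deriv ((N + 1 : ℤ) : ℂ) t).sub
            (ee_deriv ((-(N + 1) : ℤ) : ℂ) t)).div_const _).congr_deriv ?_
          rw [div_eq_iff (mul_ne_zero two_pi_I_ne hne)]
          push_cast; ring
        · exact ((ee_cont _).add (ee_cont _)).intervalIntegrable _ _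
      rw [this]
      have h3 : ee ((1 / 2 : ℝ) * ((N + 1 : ℤ) : ℂ)) = ee ((1 / 2 : ℝ) * ((-(N + 1) : ℤ) : ℂ)) := by
        have : ((1 / 2 : ℝ) * ((N + 1 : ℤ) : ℂ)) =
          ((1 / 2 : ℝ) * ((-(N + 1) : ℤ) : ℂ)) + ((N + 1 : ℤ) : ℂ) := by push_cast; ring
        rw [this, ee_add, ee_int, mul_one]
      rw [h3]; simp
    · exact (continuous_finsetSum _ fun n _ => ee_cont _).intervalIntegrable _ _
    · exact ((ee_cont _).add (ee_cont _)).intervalIntegrable _ _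

lemma SS_half (z : ℂ) (hz : ∀ n : ℤ, z ≠ (n : ℂ)) :
    Tendsto (fun N : ℕ => SS z (1 / 2) N - SS z 0 N) atTop (𝓝 (1 / 2)) := by
  let f : ℝ → ℂ := fun t => ee (t * z) - 1
  let s : ℝ → ℂ := fun t => sn t (1 / 2)
  have hfc : Continuous (dslope f 0) := by
    rw [← continuousOn_univ, continuousOn_dslope univ_mem]
    exact ⟨((ee_cont z).sub continuous_const).continuousOn,
      ((ee_deriv z 0).sub_const 1).differentiableAt⟩
  have hsd : HasDerivAt s (2 * (Real.pi : ℂ) * Complex.I) 0 := by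
    refine ((ee_deriv ((1 / 2 : ℝ) : ℂ) 0).sub (ee_deriv (-((1 / 2 : ℝ) : ℂ)) 0)).congr_deriv ?_
    simp [ee_zero]; ring
  have hsc : Continuous (dslope s 0) := by
    rw [← continuousOn_univ, continuousOn_dslope univ_mem]
    exact ⟨((ee_cont _).sub (ee_cont _)).continuousOn, hsd.differentiableAt⟩
  have hf0 : f 0 = 0 := by simp [f, ee_zero]
  have hs0 : s 0 = 0 := by simp [s, sn]
  have hI : ∀ t ∈ Set.uIcc (0 : ℝ) (1 / 2), dslope s 0 t ≠ 0 := by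
    intro t ht
    rw [Set.uIcc_of_le (by norm_num)] at ht
    by_cases h : t = 0
    · rw [h, dslope_same, hsd.deriv]; exact two_pi_I_ne
    · have h1 := sub_smul_dslope_of_zero hs0 t
      intro h2
      rw [h2, smul_zero] at h1
      exact sn_half_ne (lt_of_le_of_ne ht.1 (Ne.symm h)) (by linarith [ht.2]) h1.symm
  have hc : ContinuousOn (fun t : ℝ => dslope f 0 t / dslope s 0 t) (Set.uIcc 0 (1 / 2)) :=
    hfc.continuousOn.div hsc.continuousOn hI
  have h := (RL _ _ _ hc).add_const (1 / 2)
  rw [zero_add] at h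
  refine h.congr fun N => ?_
  rw [SS_sub z hz, ← int_dirichlet N, ← intervalIntegral.integral_add]
  · apply intervalIntegral.integral_congr
    intro t ht
    simp only
    rw [← dirichlet]
    have h1 := sub_smul_dslope_of_zero hs0 t
    have h2 := sub_smul_dslope_of_zero hf0 t
    have h3 : ee (t * z) = f t + 1 := by simp [f]
    change _ * s t * _ + _ = _
    rw [h3, ← h1, ← h2]
    have := hI t ht
    simp only [Complex.real_smul]
    field_simp
  · apply ContinuousOn.intervalIntegrable
    exact (((ee_cont _).sub (ee_cont _)).continuousOn).mul hc
  · exact (continuous_finsetSum _ fun n _ => ee_cont _).intervalIntegrable _ _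

lemma ee_ne_one (z : ℂ) (hz : ∀ n : ℤ, z ≠ (n : ℂ)) : ee z - 1 ≠ 0 := fun h => by
  obtain ⟨n, hn⟩ := ee_eq_one (sub_eq_zero.1 h)
  exact hz n hn

lemma SS_zero (z : ℂ) (hz : ∀ n : ℤ, z ≠ (n : ℂ)) :
    Tendsto (fun N : ℕ => SS z 0 N) atTop (𝓝 (1 / 2 * (ee z + 1) / (ee z - 1))) := by
  have hz' : z ∈ Complex.integerComplement := by
    rw [Complex.mem_integerComplement_iff]; rintro ⟨n, hn⟩; exact hz n hn.symm
  have h := ((tendsto_logDeriv_euler_cot_sub hz').const_add (1 / z)).div_const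
    (2 * (Real.pi : ℂ) * Complex.I)
  have hlim : (1 / z + ((Real.pi : ℂ) * Complex.cot (Real.pi * z) - 1 / z)) /
      (2 * (Real.pi : ℂ) * Complex.I) = 1 / 2 * (ee z + 1) / (ee z - 1) := by
    rw [Complex.cot_pi_eq_exp_ratio]
    change (1 / z + ((Real.pi : ℂ) * ((ee z + 1) / (Complex.I * (1 - ee z))) - 1 / z)) / _ = _
    have h1 := ee_ne_one z hz
    have h2 : 1 - ee z ≠ 0 := fun h => h1 (by linear_combination -h)
    have hp : (Real.pi : ℂ) ≠ 0 := by exact_mod_cast Real.pi_ne_zero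
    rw [add_sub_cancel, div_eq_div_iff two_pi_I_ne h1]
    field_simp
    linear_combination (1 - ee z ^ 2) * (0 : ℂ) + (ee z ^ 2 - 1) * Complex.I_sq
  rw [hlim] at h
  refine h.congr fun N => ?_
  unfold SS
  clear hlim h
  generalize 2 * (Real.pi : ℂ) * Complex.I = q
  induction N with
  | zero =>
    simp [ee_zero]
    ring
  | succ N ih =>
    rw [sum_Icc_succ', ← ih, Finset.sum_range_succ]
    simp [ee_zero, cotTerm]
    ring

lemma SS_shift (z : ℂ) (c : ℝ) (k : ℤ) (N : ℕ) : SS z (c + k) N = ee z ^ k * SS z c N := by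
  simp only [SS, Finset.mul_sum]
  refine Finset.sum_congr rfl fun n _ => ?_
  have : ((c + k : ℝ) : ℂ) * (z + n) = k * z + (c * (z + n) + ((k * n : ℤ) : ℂ)) := by
    push_cast; ring
  rw [this, ee_add, ee_add, ee_int, ee_int_mul]; ring

/-- For every real `c` and every `z ∈ ℂ ∖ ℤ`, the symmetric limit
`lim_{N→∞} ∑_{n=-N}^{N} e^{2πi c (z+n)} / (2πi (z+n))` exists and equals `R_c(e^{2πi z})`. -/
theorem symmetric_average_eq_Rc (c : ℝ) (z : ℂ) (hz : ∀ n : ℤ, z ≠ (n : ℂ)) :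
    Filter.Tendsto
      (fun N : ℕ => ∑ n ∈ Finset.Icc (-(N : ℤ)) (N : ℤ),
        ee ((c : ℂ) * (z + (n : ℂ))) / (2 * (Real.pi : ℂ) * Complex.I * (z + (n : ℂ))))
      Filter.atTop (𝓝 (Rc c (ee z))) := by
  change Tendsto (fun N : ℕ => SS z c N) atTop _
  unfold Rc
  split_ifs with hc
  · have h := (SS_zero z hz).const_mul (ee z ^ ⌈c⌉)
    simp only [← SS_shift] at h
    rw [zero_add, hc] at h
    convert h using 2
    ring
  · have hfl : (⌊c⌋ : ℝ) ≠ c := fun h => hc (by rw [← h]; simp)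
    have h0 : 0 < Int.fract c := by
      refine lt_of_le_of_ne (Int.fract_nonneg c) fun h => hfl ?_
      rw [Int.fract] at h; linarith
    have hceil : ⌈c⌉ = ⌊c⌋ + 1 := by
      rw [Int.ceil_eq_iff]
      have := Int.floor_add_fract c
      have := Int.fract_lt_one c
      push_cast
      constructor <;> linarith
    have h := (((SS_interior z hz _ h0 (Int.fract_lt_one c)).add (SS_half z hz)).add
      (SS_zero z hz)).const_mul (ee z ^ ⌊c⌋)
    simp only [sub_add_sub_cancel, sub_add_cancel, ← SS_shift] at h
    rw [Int.fract_add_floor] at h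
    convert h using 2
    have h1 := ee_ne_one z hz
    rw [hceil, zpow_add_one₀ (ee_ne_zero z)]
    field_simp
    ring
end
end

section
/- Let m be a positive integer, τ ∈ ℍ and z ∈ ℂ with 0 < Im(z) < Im(τ), and write q = e^{2πiτ}, y = e^{2πiz}. Then A_{1,m}(τ,z) = −∑_{s≥0} ∑'_{ℓ≥0} q^{ms²+ℓs}·y^{2ms+ℓ} + ∑_{s≤−1} ∑'_{ℓ≤0} q^{ms²+ℓs}·y^{2ms+ℓ}, and A_{2,m}(τ,z) = ∑_{s≥0} ∑_{ℓ≥0} ℓ·q^{ms²+ℓs}·y^{2ms+ℓ} − ∑_{s≤−1} ∑_{ℓ≤0} ℓ·q^{ms²+ℓs}·y^{2ms+ℓ}, where ∑' means that the term with ℓ = 0 is counted with coefficient 1/2, and all the series occurring converge absolutely. -/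
noncomputable section

open Complex Filter Topology
open scoped Classical

/-- The Appell–Lerch sum `A_{1,m}(τ,z) = -(1/2)·∑_{s∈ℤ} q^{ms²}y^{2ms}(1+q^s y)/(1−q^s y)`. -/
def appell₁ (m : ℕ) (τ z : ℂ) : ℂ :=
  -(1 / 2) * ∑' s : ℤ, ee ((m : ℂ) * (s : ℂ) ^ 2 * τ + 2 * (m : ℂ) * (s : ℂ) * z) *
      (1 + ee ((s : ℂ) * τ + z)) / (1 - ee ((s : ℂ) * τ + z))

/-- The Appell–Lerch sum `A_{2,m}(τ,z) = ∑_{s∈ℤ} q^{ms²+s}y^{2ms+1}/(1−q^s y)²`. -/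
def appell₂ (m : ℕ) (τ z : ℂ) : ℂ :=
  ∑' s : ℤ, ee (((m : ℂ) * (s : ℂ) ^ 2 + (s : ℂ)) * τ + (2 * (m : ℂ) * (s : ℂ) + 1) * z) /
      (1 - ee ((s : ℂ) * τ + z)) ^ 2

/-- The monomial `q^{ms²+ℓs}·y^{2ms+ℓ}`. -/
def mon (m : ℕ) (τ z : ℂ) (s l : ℤ) : ℂ :=
  ee (((m : ℂ) * (s : ℂ) ^ 2 + (l : ℂ) * (s : ℂ)) * τ + (2 * (m : ℂ) * (s : ℂ) + (l : ℂ)) * z)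

theorem al_aux (a w c g : ℕ → ℂ) (r : ℝ) (hr0 : 0 ≤ r) (ha : Summable fun n => ‖a n‖)
    (hw : ∀ n, ‖w n‖ ≤ r) (hc : Summable fun l => ‖c l‖ * r ^ l)
    (hg : ∀ n, HasSum (fun l => c l * w n ^ l) (g n)) (f : ℕ × ℕ → ℂ)
    (hf : ∀ n l, f (n, l) = c l * (a n * w n ^ l)) :
    Summable (fun p => ‖f p‖) ∧ HasSum (fun n => a n * g n) (∑' p, f p) := by
  have h1 : Summable (fun p => ‖f p‖) := by
    refine Summable.of_nonneg_of_le (fun p => norm_nonneg _) ?_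
      (ha.mul_of_nonneg hc (fun n => norm_nonneg _) (fun l => by positivity))
    rintro ⟨n, l⟩
    rw [hf, norm_mul, norm_mul, norm_pow]
    have := pow_le_pow_left₀ (norm_nonneg _) (hw n) l
    calc ‖c l‖ * (‖a n‖ * ‖w n‖ ^ l) ≤ ‖c l‖ * (‖a n‖ * r ^ l) := by gcongr
      _ = _ := by ring
  refine ⟨h1, ?_⟩
  refine HasSum.prod_fiberwise h1.of_norm.hasSum (fun n => ?_)
  have := (hg n).mul_left (a n)
  refine this.congr_fun ?_
  intro l
  rw [hf]; ring

theorem al_g1 (w : ℂ) (hw : ‖w‖ < 1) :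
    HasSum (fun l : ℕ => (if l = 0 then (1 / 2 : ℂ) else 1) * w ^ l)
      ((1 + w) / (2 * (1 - w))) := by
  have h := (hasSum_geometric_of_norm_lt_one hw).sub (hasSum_ite_eq (0 : ℕ) (1 / 2 : ℂ))
  have hne : 1 - w ≠ 0 := by
    intro h0
    rw [← sub_eq_zero.1 h0] at hw
    simp at hw
  have e : (1 + w) / (2 * (1 - w)) = (1 - w)⁻¹ - 1 / 2 := by
    field_simp
    ring
  rw [e]
  refine h.congr_fun ?_
  intro l
  by_cases hl : l = 0
  · rw [hl]; norm_num
  · simp [hl]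

theorem al_mon (m : ℕ) (τ z : ℂ) (s : ℤ) (l : ℕ) :
    mon m τ z s l = ee ((m : ℂ) * (s : ℂ) ^ 2 * τ + 2 * (m : ℂ) * (s : ℂ) * z) *
      (ee ((s : ℂ) * τ + z)) ^ l := by
  unfold mon ee
  rw [← Complex.exp_nat_mul, ← Complex.exp_add]
  congr 1
  push_cast
  ring

theorem al_mon_neg (m : ℕ) (τ z : ℂ) (s : ℤ) (l : ℕ) :
    mon m τ z s (-(l : ℤ)) = ee ((m : ℂ) * (s : ℂ) ^ 2 * τ + 2 * (m : ℂ) * (s : ℂ) * z) *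
      ((ee ((s : ℂ) * τ + z))⁻¹) ^ l := by
  unfold mon ee
  rw [← Complex.exp_neg, ← Complex.exp_nat_mul, ← Complex.exp_add]
  congr 1
  push_cast
  ring

theorem al_norm_ee (x : ℂ) : ‖ee x‖ = Real.exp (-(2 * Real.pi * x.im)) := by
  unfold ee
  rw [Complex.norm_exp]
  congr 1
  simp

theorem al_two (m : ℕ) (τ z : ℂ) (s : ℤ) :
    ee (((m : ℂ) * (s : ℂ) ^ 2 + (s : ℂ)) * τ + (2 * (m : ℂ) * (s : ℂ) + 1) * z) =
      ee ((m : ℂ) * (s : ℂ) ^ 2 * τ + 2 * (m : ℂ) * (s : ℂ) * z) * ee ((s : ℂ) * τ + z) := by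
  unfold ee
  rw [← Complex.exp_add]
  congr 1
  ring

theorem al_geom (C x : ℝ) (hx : 0 < x) (a : ℕ → ℂ) (b : ℕ → ℂ)
    (hab : ∀ n, a n = ee (b n)) (h : ∀ n : ℕ, x * n - C ≤ (b n).im) :
    Summable fun n => ‖a n‖ := by
  have hq : Real.exp (-(2 * Real.pi * x)) < 1 := by
    rw [Real.exp_lt_one_iff]
    have := Real.pi_pos
    have : 0 < 2 * Real.pi * x := by positivity
    linarith
  refine Summable.of_nonneg_of_le (fun n => norm_nonneg _) (fun n => ?_)
    ((summable_geometric_of_lt_one (Real.exp_pos _).le hq).mul_left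
      (Real.exp (2 * Real.pi * C)))
  rw [hab, al_norm_ee, ← Real.exp_nat_mul, ← Real.exp_add, Real.exp_le_exp]
  have := mul_le_mul_of_nonneg_left (h n) (by positivity : 0 ≤ 2 * Real.pi)
  linarith

/-- In the range `0 < Im z < Im τ`, the Appell–Lerch sums `A_{1,m}` and `A_{2,m}` have the
Fourier expansions `A_{1,m} = -∑_{s≥0}∑'_{ℓ≥0} q^{ms²+ℓs}y^{2ms+ℓ} + ∑_{s≤-1}∑'_{ℓ≤0} ...`
and `A_{2,m} = ∑_{s≥0}∑_{ℓ≥0} ℓ·q^{ms²+ℓs}y^{2ms+ℓ} - ∑_{s≤-1}∑_{ℓ≤0} ℓ·...`, where `∑'`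
counts the `ℓ = 0` term with coefficient `1/2`, and all series converge absolutely. -/
theorem appell_lerch_fourier_expansion (m : ℕ) (hm : 0 < m) (τ z : ℂ)
    (hτ : 0 < τ.im) (hz0 : 0 < z.im) (hzτ : z.im < τ.im) :
    Summable (fun s : ℤ => ‖ee ((m : ℂ) * (s : ℂ) ^ 2 * τ + 2 * (m : ℂ) * (s : ℂ) * z) *
        (1 + ee ((s : ℂ) * τ + z)) / (1 - ee ((s : ℂ) * τ + z))‖) ∧
    Summable (fun s : ℤ =>
      ‖ee (((m : ℂ) * (s : ℂ) ^ 2 + (s : ℂ)) * τ + (2 * (m : ℂ) * (s : ℂ) + 1) * z) /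
        (1 - ee ((s : ℂ) * τ + z)) ^ 2‖) ∧
    Summable (fun p : ℕ × ℕ =>
      ‖(if p.2 = 0 then (1 / 2 : ℂ) else 1) * mon m τ z (p.1 : ℤ) (p.2 : ℤ)‖) ∧
    Summable (fun p : ℕ × ℕ =>
      ‖(if p.2 = 0 then (1 / 2 : ℂ) else 1) * mon m τ z (-(p.1 : ℤ) - 1) (-(p.2 : ℤ))‖) ∧
    appell₁ m τ z =
      -(∑' p : ℕ × ℕ, (if p.2 = 0 then (1 / 2 : ℂ) else 1) * mon m τ z (p.1 : ℤ) (p.2 : ℤ)) +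
        ∑' p : ℕ × ℕ,
          (if p.2 = 0 then (1 / 2 : ℂ) else 1) * mon m τ z (-(p.1 : ℤ) - 1) (-(p.2 : ℤ)) ∧
    Summable (fun p : ℕ × ℕ => ‖((p.2 : ℤ) : ℂ) * mon m τ z (p.1 : ℤ) (p.2 : ℤ)‖) ∧
    Summable (fun p : ℕ × ℕ =>
      ‖((-(p.2 : ℤ) : ℤ) : ℂ) * mon m τ z (-(p.1 : ℤ) - 1) (-(p.2 : ℤ))‖) ∧
    appell₂ m τ z =
      (∑' p : ℕ × ℕ, ((p.2 : ℤ) : ℂ) * mon m τ z (p.1 : ℤ) (p.2 : ℤ)) -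
        ∑' p : ℕ × ℕ, ((-(p.2 : ℤ) : ℤ) : ℂ) * mon m τ z (-(p.1 : ℤ) - 1) (-(p.2 : ℤ)) := by
  have hpi := Real.pi_pos
  have hm1 : (1 : ℝ) ≤ m := by exact_mod_cast hm
  set A : ℤ → ℂ := fun s => ee ((m : ℂ) * (s : ℂ) ^ 2 * τ + 2 * (m : ℂ) * (s : ℂ) * z) with hA
  set W : ℤ → ℂ := fun s => ee ((s : ℂ) * τ + z) with hW
  have hWne : ∀ s, W s ≠ 0 := fun s => Complex.exp_ne_zero _
  -- bounds
  have hr : Real.exp (-(2 * Real.pi * z.im)) < 1 := by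
    rw [Real.exp_lt_one_iff]
    have : 0 < 2 * Real.pi * z.im := by positivity
    linarith
  have hρ : Real.exp (-(2 * Real.pi * (τ.im - z.im))) < 1 := by
    rw [Real.exp_lt_one_iff]
    have : 0 < 2 * Real.pi * (τ.im - z.im) := by
      have := sub_pos.2 hzτ
      positivity
    linarith
  have hWp : ∀ n : ℕ, ‖W (n : ℤ)‖ ≤ Real.exp (-(2 * Real.pi * z.im)) := by
    intro n
    rw [hW]
    simp only
    rw [al_norm_ee, Real.exp_le_exp]
    have : ((((n : ℤ) : ℂ)) * τ + z).im = n * τ.im + z.im := by simp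
    rw [this]
    have h2 : 0 ≤ 2 * Real.pi * (n * τ.im) := by positivity
    linarith
  have hWn : ∀ n : ℕ, ‖(W (-(n : ℤ) - 1))⁻¹‖ ≤ Real.exp (-(2 * Real.pi * (τ.im - z.im))) := by
    intro n
    rw [hW]
    simp only
    rw [norm_inv, al_norm_ee, ← Real.exp_neg, Real.exp_le_exp]
    have : ((((-(n : ℤ) - 1 : ℤ) : ℂ)) * τ + z).im = (-(n : ℝ) - 1) * τ.im + z.im := by simp
    rw [this]
    have h2 : 0 ≤ 2 * Real.pi * (n * τ.im) := by positivity
    linarith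
  have hAp : Summable fun n : ℕ => ‖A (n : ℤ)‖ := by
    refine al_geom 0 z.im hz0 _ _ (fun n => rfl) (fun n => ?_)
    have : ((m : ℂ) * (((n : ℤ) : ℂ)) ^ 2 * τ + 2 * (m : ℂ) * ((n : ℤ) : ℂ) * z).im
        = m * n ^ 2 * τ.im + 2 * m * n * z.im := by
      have e : ((m : ℂ) * (((n : ℤ) : ℂ)) ^ 2 * τ + 2 * (m : ℂ) * ((n : ℤ) : ℂ) * z)
        = ((m * n ^ 2 : ℝ) : ℂ) * τ + ((2 * m * n : ℝ) : ℂ) * z := by push_cast; ring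
      rw [e, Complex.add_im, Complex.im_ofReal_mul, Complex.im_ofReal_mul]
    rw [this]
    have h1 : (0 : ℝ) ≤ m * n ^ 2 * τ.im := by positivity
    have h2 : (0 : ℝ) ≤ n * z.im := by positivity
    nlinarith
  have hAn : Summable fun n : ℕ => ‖A (-(n : ℤ) - 1)‖ := by
    refine al_geom (m * τ.im) τ.im hτ _ _ (fun n => rfl) (fun n => ?_)
    have : ((m : ℂ) * (((-(n : ℤ) - 1 : ℤ) : ℂ)) ^ 2 * τ
          + 2 * (m : ℂ) * ((-(n : ℤ) - 1 : ℤ) : ℂ) * z).im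
        = m * (n + 1) ^ 2 * τ.im - 2 * m * (n + 1) * z.im := by
      have e : ((m : ℂ) * (((-(n : ℤ) - 1 : ℤ) : ℂ)) ^ 2 * τ
          + 2 * (m : ℂ) * ((-(n : ℤ) - 1 : ℤ) : ℂ) * z)
        = ((m * (n + 1) ^ 2 : ℝ) : ℂ) * τ - ((2 * m * (n + 1) : ℝ) : ℂ) * z := by push_cast; ring
      rw [e, Complex.sub_im, Complex.im_ofReal_mul, Complex.im_ofReal_mul]
    rw [this]
    have h1 : 2 * (m : ℝ) * (n + 1) * z.im ≤ 2 * m * (n + 1) * τ.im := by gcongr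
    have h2 : (n : ℝ) ≤ m * n ^ 2 := by
      have : n ≤ m * n ^ 2 := by nlinarith [Nat.le_self_pow (n := 2) (by norm_num) n]
      exact_mod_cast this
    have h3 := mul_le_mul_of_nonneg_right h2 hτ.le
    nlinarith
  have hc1 : ∀ r : ℝ, 0 ≤ r → r < 1 →
      Summable fun l : ℕ => ‖(if l = 0 then (1 / 2 : ℂ) else 1)‖ * r ^ l := by
    intro r h0 h1
    refine Summable.of_nonneg_of_le (fun l => by positivity) (fun l => ?_)
      (summable_geometric_of_lt_one h0 h1)
    have : ‖(if l = 0 then (1 / 2 : ℂ) else 1)‖ ≤ 1 := by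
      split_ifs
      · norm_num
      · simp
    exact mul_le_of_le_one_left (by positivity) this
  have hc2 : ∀ r : ℝ, 0 ≤ r → r < 1 → Summable fun l : ℕ => ‖((l : ℤ) : ℂ)‖ * r ^ l := by
    intro r h0 h1
    have := summable_pow_mul_geometric_of_norm_lt_one 1 (r := r)
      (by rwa [Real.norm_of_nonneg h0])
    simpa using this
  have hc3 : ∀ r : ℝ, 0 ≤ r → r < 1 →
      Summable fun l : ℕ => ‖((-(l : ℤ) : ℤ) : ℂ)‖ * r ^ l := by
    intro r h0 h1
    simpa using hc2 r h0 h1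
  have hg2 : ∀ w : ℂ, ‖w‖ < 1 →
      HasSum (fun l : ℕ => ((l : ℤ) : ℂ) * w ^ l) (w / (1 - w) ^ 2) := by
    intro w hw
    simpa using hasSum_coe_mul_geometric_of_norm_lt_one hw
  have hg3 : ∀ w : ℂ, ‖w‖ < 1 →
      HasSum (fun l : ℕ => ((-(l : ℤ) : ℤ) : ℂ) * w ^ l) (-(w / (1 - w) ^ 2)) := by
    intro w hw
    simpa using (hg2 w hw).neg
  obtain ⟨s1, t1⟩ := al_aux (fun n => A n) (fun n => W n) _ _ _ (Real.exp_pos _).le hAp hWp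
    (hc1 _ (Real.exp_pos _).le hr) (fun n => al_g1 _ ((hWp n).trans_lt hr))
    (fun p : ℕ × ℕ => (if p.2 = 0 then (1 / 2 : ℂ) else 1) * mon m τ z (p.1 : ℤ) (p.2 : ℤ))
    (fun n l => by simp only [al_mon, hA, hW])
  obtain ⟨s2, t2⟩ := al_aux (fun n => A (-(n : ℤ) - 1)) (fun n => (W (-(n : ℤ) - 1))⁻¹) _ _ _
    (Real.exp_pos _).le hAn hWn
    (hc1 _ (Real.exp_pos _).le hρ) (fun n => al_g1 _ ((hWn n).trans_lt hρ))
    (fun p : ℕ × ℕ => (if p.2 = 0 then (1 / 2 : ℂ) else 1) *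
      mon m τ z (-(p.1 : ℤ) - 1) (-(p.2 : ℤ)))
    (fun n l => by simp only [al_mon_neg, hA, hW])
  obtain ⟨s3, t3⟩ := al_aux (fun n => A n) (fun n => W n) _ _ _ (Real.exp_pos _).le hAp hWp
    (hc2 _ (Real.exp_pos _).le hr) (fun n => hg2 _ ((hWp n).trans_lt hr))
    (fun p : ℕ × ℕ => ((p.2 : ℤ) : ℂ) * mon m τ z (p.1 : ℤ) (p.2 : ℤ))
    (fun n l => by simp only [al_mon, hA, hW])
  obtain ⟨s4, t4⟩ := al_aux (fun n => A (-(n : ℤ) - 1)) (fun n => (W (-(n : ℤ) - 1))⁻¹) _ _ _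
    (Real.exp_pos _).le hAn hWn
    (hc3 _ (Real.exp_pos _).le hρ) (fun n => hg3 _ ((hWn n).trans_lt hρ))
    (fun p : ℕ × ℕ => ((-(p.2 : ℤ) : ℤ) : ℂ) * mon m τ z (-(p.1 : ℤ) - 1) (-(p.2 : ℤ)))
    (fun n l => by simp only [al_mon_neg, hA, hW])
  have hnp : ∀ n : ℕ, 1 - W n ≠ 0 := by
    intro n h0
    have := (hWp n).trans_lt hr
    rw [← sub_eq_zero.1 h0] at this
    simp at this
  have hnn : ∀ n : ℕ, 1 - W (-(n : ℤ) - 1) ≠ 0 := by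
    intro n h0
    have := (hWn n).trans_lt hρ
    rw [← sub_eq_zero.1 h0] at this
    simp at this
  have hnn' : ∀ n : ℕ, W (-(n : ℤ) - 1) - 1 ≠ 0 := by
    intro n h0
    exact hnn n (by linear_combination -h0)
  have H1 : HasSum (fun s : ℤ => A s * (1 + W s) / (1 - W s))
      (2 * (∑' p : ℕ × ℕ, (if p.2 = 0 then (1 / 2 : ℂ) else 1) * mon m τ z (p.1 : ℤ) (p.2 : ℤ)) +
        -2 * ∑' p : ℕ × ℕ,
          (if p.2 = 0 then (1 / 2 : ℂ) else 1) * mon m τ z (-(p.1 : ℤ) - 1) (-(p.2 : ℤ))) := by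
    refine HasSum.of_nat_of_neg_add_one ((t1.mul_left 2).congr_fun ?_)
      ((t2.mul_left (-2)).congr_fun ?_)
    · intro n
      have := hnp n
      field_simp
    · intro n
      have e : (-((n : ℤ) + 1)) = -(n : ℤ) - 1 := by ring
      rw [e]
      have := hnn n
      have := hnn' n
      have := hWne (-(n : ℤ) - 1)
      field_simp
      ring
  have H2 : HasSum (fun s : ℤ => A s * W s / (1 - W s) ^ 2)
      ((∑' p : ℕ × ℕ, ((p.2 : ℤ) : ℂ) * mon m τ z (p.1 : ℤ) (p.2 : ℤ)) +
        -1 * ∑' p : ℕ × ℕ, ((-(p.2 : ℤ) : ℤ) : ℂ) *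
          mon m τ z (-(p.1 : ℤ) - 1) (-(p.2 : ℤ))) := by
    refine HasSum.of_nat_of_neg_add_one (t3.congr_fun ?_)
      ((t4.mul_left (-1)).congr_fun ?_)
    · intro n
      have := hnp n
      field_simp
    · intro n
      have e : (-((n : ℤ) + 1)) = -(n : ℤ) - 1 := by ring
      rw [e]
      have := hnn n
      have := hnn' n
      have := hWne (-(n : ℤ) - 1)
      field_simp
      ring
  have e2 : (fun s : ℤ =>
      ee (((m : ℂ) * (s : ℂ) ^ 2 + (s : ℂ)) * τ + (2 * (m : ℂ) * (s : ℂ) + 1) * z) /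
        (1 - ee ((s : ℂ) * τ + z)) ^ 2) = fun s : ℤ => A s * W s / (1 - W s) ^ 2 := by
    funext s
    rw [al_two]
  refine ⟨H1.summable.norm, ?_, s1, s2, ?_, s3, s4, ?_⟩
  · have := H2.summable
    rw [← e2] at this
    exact this.norm
  · unfold appell₁
    have := H1.tsum_eq
    simp only [hA, hW] at this
    rw [this]
    ring
  · unfold appell₂
    rw [e2, H2.tsum_eq]
    ring
end
end
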